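/- Let b>0, d∈ℕ and let (G_n)_{n≥0} be a (b,d)-expander. Let α∈(0,1/2) and c∈(0,1). There is a positive constant C', depending only on α, c, b, and d, such that for all n with |V_n| large enough and for every p ∈ [p_{n,α}(c), p_{n,1−α}(c)]: (d/dp) E_p(L_n^{(1)}) ≥ C'·|V_n|, where (d/dp) E_p(L_n^{(1)}) is the derivative at p of the map q ↦ E_{n,q}(L_n^{(1)}). -/

import Mathlib

open Filter

noncomputable section

/-- The spanning subgraph of `G` determined by the configuration `x : {0,1}^E`:
an edge of `G` is retained iff its coordinate equals `true`. -/
def percoGraph {V : Type*} (G : SimpleGraph V) (x : G.edgeSet → Bool) : SimpleGraph V :=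
  SimpleGraph.fromEdgeSet {e : Sym2 V | ∃ h : e ∈ G.edgeSet, x ⟨e, h⟩ = true}

/-- The vertex set of the connected component of `v` in the configuration `x`. -/
def percoComp {V : Type*} (G : SimpleGraph V) (x : G.edgeSet → Bool) (v : V) : Set V :=
  {u | (percoGraph G x).Reachable v u}

/-- The number of vertices of the connected component of `v` in the configuration `x`. -/
def compSize {V : Type*} (G : SimpleGraph V) (x : G.edgeSet → Bool) (v : V) : ℕ :=
  (percoComp G x v).ncard

/-- `L⁽¹⁾`: the number of vertices of the largest connected component of the configuration. -/
def largestComp {V : Type*} (G : SimpleGraph V) (x : G.edgeSet → Bool) : ℕ :=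
  sSup (Set.range (compSize G x))

/-- The probability of a single configuration under the product Bernoulli(p) measure. -/
def configProb {E : Type*} (p : ℝ) (x : E → Bool) : ℝ :=
  ∏ᶠ e : E, if x e then p else 1 - p

/-- The product Bernoulli(p) probability of a set of configurations. -/
def probC {E : Type*} (p : ℝ) (A : Set (E → Bool)) : ℝ :=
  ∑ᶠ x ∈ A, configProb p x

/-- Expectation under the product Bernoulli(p) measure. -/
def expC {E : Type*} (p : ℝ) (f : (E → Bool) → ℝ) : ℝ :=
  ∑ᶠ x : E → Bool, configProb p x * f x

/-- Variance under the product Bernoulli(p) measure. -/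
def varC {E : Type*} (p : ℝ) (f : (E → Bool) → ℝ) : ℝ :=
  expC p (fun x => f x ^ 2) - (expC p f) ^ 2

open Classical in
/-- The configuration `x` with coordinate `e` set to `b`. -/
def setEdge {E : Type*} (x : E → Bool) (e : E) (b : Bool) : E → Bool :=
  fun e' => if e' = e then b else x e'

/-- The operator `Δ_{e,p} f (x) = f(x) - ∫ f(x) dx(e)`. -/
def deltaE {E : Type*} (p : ℝ) (f : (E → Bool) → ℝ) (e : E) (x : E → Bool) : ℝ :=
  f x - (p * f (setEdge x e true) + (1 - p) * f (setEdge x e false))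

/-- The norm `‖g‖_{1,p}`. -/
def norm1 {E : Type*} (p : ℝ) (g : (E → Bool) → ℝ) : ℝ :=
  expC p fun x => |g x|

/-- The squared norm `‖g‖_{2,p}²`. -/
def sqNorm2 {E : Type*} (p : ℝ) (g : (E → Bool) → ℝ) : ℝ :=
  expC p fun x => g x ^ 2

/-- `|E(S, Sᶜ)|`: the number of edges of `G` with one endpoint in `S` and the other outside `S`
(counted via the ordered pair whose first coordinate lies in `S`). -/
def edgeBoundaryCard {V : Type*} (G : SimpleGraph V) (S : Set V) : ℕ :=
  {q : V × V | G.Adj q.1 q.2 ∧ q.1 ∈ S ∧ q.2 ∉ S}.ncard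

/-- The maximal degree of `G` is at most `d`. -/
def DegreeLE {V : Type*} (G : SimpleGraph V) (d : ℕ) : Prop :=
  ∀ v, {u | G.Adj v u}.ncard ≤ d

/-- The Cheeger (edge-isoperimetric) constant of `G` is strictly greater than `b`. -/
def CheegerGT {V : Type*} (G : SimpleGraph V) (b : ℝ) : Prop :=
  ∀ S : Set V, 0 < S.ncard → 2 * S.ncard ≤ Nat.card V →
    b * (S.ncard : ℝ) < (edgeBoundaryCard G S : ℝ)

/-- A `(b,d)`-expander: a sequence of finite graphs with `|V_n| → ∞`, maximal degree at most `d`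
and Cheeger constant greater than `b`. -/
structure ExpanderSeq (b : ℝ) (d : ℕ) where
  V : ℕ → Type
  finV : ∀ n, Finite (V n)
  G : ∀ n, SimpleGraph (V n)
  card_tendsto : Tendsto (fun n => Nat.card (V n)) atTop atTop
  degree_le : ∀ n, DegreeLE (G n) d
  cheeger_gt : ∀ n, CheegerGT (G n) b

/-!
Russo's formula writes `d/dp E_p(L)` as the sum of the influences `∑ e, E_p[D_e L]`, where `D_e L`
is the increase of `L` when `e` is opened. This sum is bounded below in two ways. Opening any
boundary edge of the largest component enlarges it, so by the Cheeger inequality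
`∑ e, D_e L ≥ b · min (L, |V| - L)` pointwise; and by an `L¹` Poincaré inequality the sum dominates
`E |L(x) - L(y)|` for independent configurations `x` and `y`. If `L(y) < c|V| ≤ L(x)`, then
`min (L(y), |V| - L(y)) + |L(x) - L(y)| ≥ min (c, 1 - c) · |V|`, and inside the critical window this
event has probability at least `α²`.
-/

section Configurations

variable {E : Type*}

/-- The factor contributed by an edge in state `s` to the product Bernoulli(`p`) weight. -/
def bernoulliWeight (p : ℝ) (s : Bool) : ℝ :=
  if s then p else 1 - p

/-- The discrete derivative of `f` in the direction of the edge `e`: the change of `f` when `e`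
is switched from closed to open. Its norm `norm1 p (edgeDeriv f e)` is the influence of `e`. -/
def edgeDeriv (f : (E → Bool) → ℝ) (e : E) (x : E → Bool) : ℝ :=
  f (setEdge x e true) - f (setEdge x e false)

theorem setEdge_eq_update [DecidableEq E] (x : E → Bool) (e : E) (s : Bool) :
    setEdge x e s = Function.update x e s := by
  ext e'
  simp [setEdge, Function.update_apply]

@[simp]
theorem setEdge_same (x : E → Bool) (e : E) (s : Bool) : setEdge x e s e = s := by
  simp [setEdge]

theorem setEdge_of_ne (x : E → Bool) {e e' : E} (h : e' ≠ e) (s : Bool) :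
    setEdge x e s e' = x e' := by
  simp [setEdge, h]

@[simp]
theorem setEdge_self (x : E → Bool) (e : E) : setEdge x e (x e) = x := by
  classical simp [setEdge_eq_update]

@[simp]
theorem setEdge_setEdge (x : E → Bool) (e : E) (s t : Bool) :
    setEdge (setEdge x e s) e t = setEdge x e t := by
  classical simp [setEdge_eq_update]

theorem setEdge_mono_right (x : E → Bool) (e : E) : Monotone (setEdge x e) := by
  classical
  intro s t hst
  simpa only [setEdge_eq_update] using Function.update_mono hst

theorem edgeDeriv_setEdge (f : (E → Bool) → ℝ) (e : E) (x : E → Bool) (s : Bool) :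
    edgeDeriv f e (setEdge x e s) = edgeDeriv f e x := by
  simp [edgeDeriv]

theorem edgeDeriv_nonneg {f : (E → Bool) → ℝ} (hf : Monotone f) (e : E) (x : E → Bool) :
    0 ≤ edgeDeriv f e x :=
  sub_nonneg.mpr (hf (setEdge_mono_right x e (Bool.false_le true)))

theorem abs_sub_setEdge_le (f : (E → Bool) → ℝ) (e : E) (x : E → Bool) (s : Bool) :
    |f x - f (setEdge x e s)| ≤ |edgeDeriv f e x| := by
  have hx := setEdge_self x e
  cases hxe : x e <;> rw [hxe] at hx <;> cases s <;> simp [edgeDeriv, hx, abs_sub_comm]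

theorem two_nsmul_sum_eq_sum_setEdge [Fintype E] [DecidableEq E] {M : Type*} [AddCommMonoid M]
    (e : E) (F : (E → Bool) → M) :
    2 • ∑ x, F x = ∑ x, (F (setEdge x e true) + F (setEdge x e false)) := by
  have hflip : Function.Involutive fun x : E → Bool => setEdge x e !x e := fun x => by simp
  calc 2 • ∑ x, F x = ∑ x, F x + ∑ x, F (setEdge x e !x e) := by
        rw [two_nsmul]
        exact congrArg _ (Equiv.sum_comp hflip.toPerm F).symm
    _ = ∑ x, (F (setEdge x e true) + F (setEdge x e false)) := by
        rw [← Finset.sum_add_distrib]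
        refine Finset.sum_congr rfl fun x _ => ?_
        have hx := setEdge_self x e
        cases hxe : x e <;> rw [hxe] at hx <;> simp [hx, add_comm]

theorem prod_erase_setEdge [Fintype E] [DecidableEq E] {M : Type*} [CommMonoid M] (w : Bool → M)
    (x : E → Bool) (e : E) (s : Bool) :
    ∏ e' ∈ Finset.univ.erase e, w (setEdge x e s e') = ∏ e' ∈ Finset.univ.erase e, w (x e') :=
  Finset.prod_congr rfl fun e' he' => by rw [setEdge_of_ne x (Finset.ne_of_mem_erase he')]

end Configurations

section BernoulliMeasure

variable {E : Type*}

@[simp]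
theorem bernoulliWeight_true (p : ℝ) : bernoulliWeight p true = p :=
  rfl

@[simp]
theorem bernoulliWeight_false (p : ℝ) : bernoulliWeight p false = 1 - p :=
  rfl

theorem bernoulliWeight_nonneg {p : ℝ} (hp : p ∈ Set.Icc (0 : ℝ) 1) (s : Bool) :
    0 ≤ bernoulliWeight p s := by
  cases s
  · simpa using hp.2
  · simpa using hp.1

theorem configProb_eq_prod [Fintype E] (p : ℝ) (x : E → Bool) :
    configProb p x = ∏ e, bernoulliWeight p (x e) :=
  finprod_eq_prod_of_fintype _

theorem configProb_setEdge [Fintype E] [DecidableEq E] (p : ℝ) (x : E → Bool) (e : E) (s : Bool) :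
    configProb p (setEdge x e s) =
      bernoulliWeight p s * ∏ e' ∈ Finset.univ.erase e, bernoulliWeight p (x e') := by
  rw [configProb_eq_prod, ← Finset.mul_prod_erase _ _ (Finset.mem_univ e), setEdge_same,
    prod_erase_setEdge]

theorem configProb_nonneg {p : ℝ} (hp : p ∈ Set.Icc (0 : ℝ) 1) (x : E → Bool) :
    0 ≤ configProb p x :=
  finprod_nonneg fun e => bernoulliWeight_nonneg hp (x e)

theorem expC_eq_sum [Fintype E] [DecidableEq E] (p : ℝ) (f : (E → Bool) → ℝ) :
    expC p f = ∑ x, configProb p x * f x :=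
  finsum_eq_sum_of_fintype _

theorem probC_eq_expC (p : ℝ) (A : Set (E → Bool)) : probC p A = expC p (A.indicator 1) := by
  classical
  unfold probC expC
  refine finsum_congr fun x => ?_
  by_cases hx : x ∈ A <;> simp [hx]

theorem expC_const_mul (p k : ℝ) (f : (E → Bool) → ℝ) :
    expC p (fun x => k * f x) = k * expC p f := by
  simp only [expC, mul_finsum, mul_left_comm]

theorem expC_mul_const (p k : ℝ) (f : (E → Bool) → ℝ) :
    expC p (fun x => f x * k) = expC p f * k := by
  simp only [mul_comm _ k, expC_const_mul]

theorem expC_expC_indicator_mul_indicator (p k : ℝ) (A B : Set (E → Bool)) :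
    expC p (fun x => expC p fun y => k * (A.indicator 1 x * B.indicator 1 y)) =
      k * (probC p A * probC p B) := by
  simp only [expC_const_mul, expC_mul_const, probC_eq_expC]

theorem expC_nonneg {p : ℝ} (hp : p ∈ Set.Icc (0 : ℝ) 1) {f : (E → Bool) → ℝ}
    (hf : ∀ x, 0 ≤ f x) : 0 ≤ expC p f :=
  finsum_nonneg fun x => mul_nonneg (configProb_nonneg hp x) (hf x)

variable [Finite E]

theorem expC_add (p : ℝ) (f g : (E → Bool) → ℝ) :
    expC p (fun x => f x + g x) = expC p f + expC p g := by
  simp only [expC, mul_add]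
  exact finsum_add_distrib (Set.toFinite _) (Set.toFinite _)

theorem expC_sum {ι : Type*} (p : ℝ) (s : Finset ι) (f : ι → (E → Bool) → ℝ) :
    expC p (fun x => ∑ i ∈ s, f i x) = ∑ i ∈ s, expC p (f i) := by
  simp only [expC, Finset.mul_sum]
  exact finsum_sum_comm s _ fun _ _ => Set.toFinite _

theorem expC_mono {p : ℝ} (hp : p ∈ Set.Icc (0 : ℝ) 1) {f g : (E → Bool) → ℝ}
    (hfg : ∀ x, f x ≤ g x) : expC p f ≤ expC p g :=
  finsum_le_finsum' (Set.toFinite _) (Set.toFinite _) fun x =>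
    mul_le_mul_of_nonneg_left (hfg x) (configProb_nonneg hp x)

theorem expC_const (p k : ℝ) : expC p (fun _ : E → Bool => k) = k := by
  classical
  cases nonempty_fintype E
  rw [expC_eq_sum, ← Finset.sum_mul]
  simp only [configProb_eq_prod]
  rw [← Fintype.prod_sum fun _ : E => bernoulliWeight p]
  simp

theorem probC_compl (p : ℝ) (A : Set (E → Bool)) : probC p Aᶜ = 1 - probC p A := by
  have hadd : probC p A + probC p Aᶜ = 1 := by
    simp only [probC_eq_expC]
    rw [← expC_add, ← expC_const (E := E) p 1]
    congr with x
    exact congrFun (Set.indicator_self_add_compl A 1) x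
  linarith

end BernoulliMeasure

section Russo

variable {E : Type*}

theorem hasDerivAt_bernoulliWeight (s : Bool) (p : ℝ) :
    HasDerivAt (fun q => bernoulliWeight q s) (if s then 1 else -1) p := by
  cases s
  · simpa using (hasDerivAt_id' p).const_sub 1
  · simpa using hasDerivAt_id' p

theorem hasDerivAt_configProb [Fintype E] [DecidableEq E] (x : E → Bool) (p : ℝ) :
    HasDerivAt (fun q => configProb q x)
      (∑ e, (∏ e' ∈ Finset.univ.erase e, bernoulliWeight p (x e')) * if x e then 1 else -1) p := by
  simpa only [configProb_eq_prod, smul_eq_mul] using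
    HasDerivAt.fun_finsetProd fun e (_ : e ∈ Finset.univ) => hasDerivAt_bernoulliWeight (x e) p

theorem sum_prod_erase_mul_sign [Fintype E] [DecidableEq E] (p : ℝ) (f : (E → Bool) → ℝ) (e : E) :
    ∑ x, (∏ e' ∈ Finset.univ.erase e, bernoulliWeight p (x e')) * (if x e then 1 else -1) * f x =
      expC p (edgeDeriv f e) := by
  refine nsmul_right_injective two_ne_zero ?_
  dsimp only
  rw [expC_eq_sum, two_nsmul_sum_eq_sum_setEdge e, two_nsmul_sum_eq_sum_setEdge e]
  refine Finset.sum_congr rfl fun x _ => ?_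
  simp only [prod_erase_setEdge, configProb_setEdge, edgeDeriv_setEdge, setEdge_same]
  simp only [bernoulliWeight_true, bernoulliWeight_false, edgeDeriv, if_true, Bool.false_eq_true,
    if_false]
  ring

theorem hasDerivAt_expC [Fintype E] (f : (E → Bool) → ℝ) (p : ℝ) :
    HasDerivAt (fun q => expC q f) (∑ e, expC p (edgeDeriv f e)) p := by
  classical
  have hsum := HasDerivAt.fun_sum fun x (_ : x ∈ Finset.univ) =>
    (hasDerivAt_configProb x p).mul_const (f x)
  simp only [← expC_eq_sum] at hsum
  refine hsum.congr_deriv ?_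
  simp only [Finset.sum_mul]
  rw [Finset.sum_comm]
  exact Finset.sum_congr rfl fun e _ => sum_prod_erase_mul_sign p f e

theorem monotoneOn_expC [Finite E] {f : (E → Bool) → ℝ} (hf : Monotone f) :
    MonotoneOn (fun p => expC p f) (Set.Icc 0 1) := by
  cases nonempty_fintype E
  refine monotoneOn_of_hasDerivWithinAt_nonneg (convex_Icc 0 1)
    (fun p _ => (hasDerivAt_expC f p).continuousAt.continuousWithinAt)
    (fun p _ => (hasDerivAt_expC f p).hasDerivWithinAt) fun p hp => ?_
  exact Finset.sum_nonneg fun e _ => expC_nonneg (interior_subset hp) (edgeDeriv_nonneg hf e)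

end Russo

section Poincare

variable {E : Type*}

theorem expC_expC_eq_sum [Fintype E] [DecidableEq E] (p : ℝ)
    (F : (E → Bool) → (E → Bool) → ℝ) :
    expC p (fun x => expC p (F x)) =
      ∑ z : (E → Bool) × (E → Bool), configProb p z.1 * configProb p z.2 * F z.1 z.2 := by
  simp only [expC_eq_sum, Fintype.sum_prod_type, Finset.mul_sum, mul_assoc]

theorem configProb_piecewise_mul [Finite E] [DecidableEq E] (p : ℝ) (S : Finset E)
    (x y : E → Bool) :
    configProb p (S.piecewise y x) * configProb p (S.piecewise x y) =
      configProb p x * configProb p y := by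
  cases nonempty_fintype E
  simp only [configProb_eq_prod, ← Finset.prod_mul_distrib]
  refine Finset.prod_congr rfl fun e _ => ?_
  by_cases he : e ∈ S <;> simp [he, mul_comm]

theorem expC_expC_piecewise [Finite E] [DecidableEq E] (p : ℝ) (S : Finset E)
    (F : (E → Bool) → (E → Bool) → ℝ) :
    expC p (fun x => expC p fun y => F (S.piecewise y x) (S.piecewise x y)) =
      expC p (fun x => expC p (F x)) := by
  cases nonempty_fintype E
  have hswap : Function.Involutive fun z : (E → Bool) × (E → Bool) =>
      (S.piecewise z.2 z.1, S.piecewise z.1 z.2) := fun z => by simp [Finset.piecewise_same]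
  simp only [expC_expC_eq_sum]
  rw [← Equiv.sum_comp hswap.toPerm fun z => configProb p z.1 * configProb p z.2 * F z.1 z.2]
  simp only [Function.Involutive.coe_toPerm, configProb_piecewise_mul]

theorem expC_expC_abs_sub_piecewise_insert_le [Finite E] [DecidableEq E] {p : ℝ}
    (hp : p ∈ Set.Icc (0 : ℝ) 1) (f : (E → Bool) → ℝ) {S : Finset E} {e : E} (he : e ∉ S) :
    expC p (fun x => expC p fun y => |f (S.piecewise y x) - f ((insert e S).piecewise y x)|) ≤
      norm1 p (edgeDeriv f e) := by
  have hinsert (x y : E → Bool) :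
      (insert e S).piecewise y x = setEdge (S.piecewise y x) e (S.piecewise x y e) := by
    rw [Finset.piecewise_insert, Finset.piecewise_eq_of_notMem _ _ _ he, setEdge_eq_update]
  simp only [hinsert]
  rw [expC_expC_piecewise p S fun z w => |f z - f (setEdge z e (w e))|]
  refine expC_mono hp fun x => ?_
  calc expC p (fun y => |f x - f (setEdge x e (y e))|)
      ≤ expC p fun _ => |edgeDeriv f e x| := expC_mono hp fun y => abs_sub_setEdge_le f e x (y e)
    _ = |edgeDeriv f e x| := expC_const p _

theorem expC_expC_abs_sub_piecewise_le [Finite E] [DecidableEq E] {p : ℝ}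
    (hp : p ∈ Set.Icc (0 : ℝ) 1) (f : (E → Bool) → ℝ) (S : Finset E) :
    expC p (fun x => expC p fun y => |f x - f (S.piecewise y x)|) ≤
      ∑ e ∈ S, norm1 p (edgeDeriv f e) := by
  induction S using Finset.induction_on with
  | empty => simp [expC_const]
  | insert e S he ih =>
    calc expC p (fun x => expC p fun y => |f x - f ((insert e S).piecewise y x)|)
        ≤ expC p fun x => expC p fun y => |f x - f (S.piecewise y x)| +
            |f (S.piecewise y x) - f ((insert e S).piecewise y x)| :=
          expC_mono hp fun x => expC_mono hp fun y => abs_sub_le _ _ _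
      _ = expC p (fun x => expC p fun y => |f x - f (S.piecewise y x)|) +
            expC p (fun x => expC p fun y =>
              |f (S.piecewise y x) - f ((insert e S).piecewise y x)|) := by
          simp only [expC_add]
      _ ≤ ∑ e ∈ S, norm1 p (edgeDeriv f e) + norm1 p (edgeDeriv f e) :=
          add_le_add ih (expC_expC_abs_sub_piecewise_insert_le hp f he)
      _ = ∑ e ∈ insert e S, norm1 p (edgeDeriv f e) := by
          rw [Finset.sum_insert he, add_comm]

theorem expC_expC_abs_sub_le_sum_norm1_edgeDeriv [Fintype E] {p : ℝ}
    (hp : p ∈ Set.Icc (0 : ℝ) 1) (f : (E → Bool) → ℝ) :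
    expC p (fun x => expC p fun y => |f x - f y|) ≤ ∑ e, norm1 p (edgeDeriv f e) := by
  classical
  simpa using expC_expC_abs_sub_piecewise_le hp f Finset.univ

theorem expC_expC_abs_sub_le_deriv_expC [Finite E] {p : ℝ} (hp : p ∈ Set.Icc (0 : ℝ) 1)
    {f : (E → Bool) → ℝ} (hf : Monotone f) :
    expC p (fun x => expC p fun y => |f x - f y|) ≤ deriv (fun q => expC q f) p := by
  cases nonempty_fintype E
  rw [(hasDerivAt_expC f p).deriv]
  simpa only [norm1, abs_of_nonneg (edgeDeriv_nonneg hf _ _)] using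
    expC_expC_abs_sub_le_sum_norm1_edgeDeriv hp f

end Poincare

section Dispersion

variable {E : Type*}

theorem min_mul_le_min_add_abs_sub {N c s t : ℝ} (hN : 0 ≤ N) (hs : c * N ≤ s) (ht : t < c * N) :
    min c (1 - c) * N ≤ min t (N - t) + |s - t| := by
  have habs := le_abs_self (s - t)
  rw [min_mul_of_nonneg _ _ hN]
  rcases le_total t (N - t) with h | h
  · rw [min_eq_left h]
    exact (min_le_left _ _).trans (by linarith)
  · rw [min_eq_right h]
    exact (min_le_right _ _).trans (by linarith)

theorem min_mul_probC_mul_le_expC_min_add [Finite E] {p : ℝ} (hp : p ∈ Set.Icc (0 : ℝ) 1)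
    {f : (E → Bool) → ℝ} {N : ℝ} (hf : ∀ x, f x ∈ Set.Icc 0 N) (c : ℝ) :
    min c (1 - c) * N *
        (probC p {x | c * N ≤ f x} * (1 - probC p {x | c * N ≤ f x})) ≤
      expC p (fun x => min (f x) (N - f x)) + expC p (fun x => expC p fun y => |f x - f y|) := by
  set A : Set (E → Bool) := {x | c * N ≤ f x}
  have hpointwise (x y : E → Bool) :
      min c (1 - c) * N * (A.indicator 1 x * Aᶜ.indicator 1 y) ≤
        min (f y) (N - f y) + |f x - f y| := by
    by_cases hxy : x ∈ A ∧ y ∈ Aᶜ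
    · simpa [hxy.1, hxy.2] using
        min_mul_le_min_add_abs_sub ((hf x).1.trans (hf x).2) hxy.1 (not_le.mp hxy.2)
    · have hzero : A.indicator (1 : (E → Bool) → ℝ) x * Aᶜ.indicator 1 y = 0 := by
        simpa [Set.indicator_apply, imp_iff_not_or, or_comm] using hxy
      rw [hzero, mul_zero]
      exact add_nonneg (le_min (hf y).1 (sub_nonneg.mpr (hf y).2)) (abs_nonneg _)
  calc min c (1 - c) * N * (probC p A * (1 - probC p A))
      = expC p (fun x => expC p fun y =>
          min c (1 - c) * N * (A.indicator 1 x * Aᶜ.indicator 1 y)) := by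
        rw [expC_expC_indicator_mul_indicator, probC_compl]
    _ ≤ expC p (fun x => expC p fun y => min (f y) (N - f y) + |f x - f y|) :=
        expC_mono hp fun x => expC_mono hp (hpointwise x)
    _ = expC p (fun x => min (f x) (N - f x)) +
          expC p (fun x => expC p fun y => |f x - f y|) := by
        simp only [expC_add, expC_const]

theorem monotoneOn_probC_of_isUpperSet [Finite E] {A : Set (E → Bool)} (hA : IsUpperSet A) :
    MonotoneOn (fun p => probC p A) (Set.Icc 0 1) := by
  simp only [probC_eq_expC]
  refine monotoneOn_expC fun x y hxy => ?_
  by_cases hx : x ∈ A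
  · simp [hx, hA hxy hx]
  · rw [Set.indicator_of_notMem hx]
    exact Set.indicator_nonneg (fun _ _ => zero_le_one) y

end Dispersion

section EdgeBoundary

variable {V : Type*} {G : SimpleGraph V}

theorem edgeBoundaryCard_compl (G : SimpleGraph V) (S : Set V) :
    edgeBoundaryCard G Sᶜ = edgeBoundaryCard G S := by
  unfold edgeBoundaryCard
  rw [← Set.ncard_image_of_injective _ Prod.swap_injective, Set.image_swap_eq_preimage_swap]
  congr with q
  simp [G.adj_comm, and_comm]

theorem CheegerGT.mul_min_ncard_le_edgeBoundaryCard [Finite V] {b : ℝ} (hG : CheegerGT G b)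
    (S : Set V) :
    b * min (S.ncard : ℝ) (Nat.card V - S.ncard) ≤ edgeBoundaryCard G S := by
  have hhalf (T : Set V) (hT : 2 * T.ncard ≤ Nat.card V) :
      b * T.ncard ≤ edgeBoundaryCard G T := by
    rcases Nat.eq_zero_or_pos T.ncard with h0 | hpos
    · simp [h0]
    · exact (hG T hpos hT).le
  have hcard := Set.ncard_add_ncard_compl S
  have hcompl : (Nat.card V : ℝ) - S.ncard = Sᶜ.ncard := by
    rw [← hcard, Nat.cast_add, add_sub_cancel_left]
  rw [hcompl]
  rcases le_total S.ncard Sᶜ.ncard with h | h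
  · rw [min_eq_left (by exact_mod_cast h)]
    exact hhalf S (by lia)
  · rw [min_eq_right (by exact_mod_cast h), ← edgeBoundaryCard_compl]
    exact hhalf Sᶜ (by lia)

theorem edgeBoundaryCard_le_sum [Fintype G.edgeSet] {S : Set V} {F : G.edgeSet → ℝ}
    (hF : ∀ e, 0 ≤ F e)
    (hF' : ∀ u w (h : G.Adj u w), u ∈ S → w ∉ S → 1 ≤ F ⟨s(u, w), h⟩) :
    (edgeBoundaryCard G S : ℝ) ≤ ∑ e, F e := by
  set B : Set (V × V) := {q | G.Adj q.1 q.2 ∧ q.1 ∈ S ∧ q.2 ∉ S}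
  let φ : B → G.edgeSet := fun q => ⟨s(q.1.1, q.1.2), q.2.1⟩
  have hφ : Function.Injective φ := by
    rintro ⟨⟨u, w⟩, _, hu, hw⟩ ⟨⟨u', w'⟩, _, hu', hw'⟩ h
    rcases Sym2.eq_iff.mp (congrArg Subtype.val h) with ⟨rfl, rfl⟩ | ⟨rfl, rfl⟩
    · rfl
    · exact absurd hu hw'
  have := Fintype.ofInjective φ hφ
  calc (edgeBoundaryCard G S : ℝ) = ∑ _q : B, 1 := by
        simp [edgeBoundaryCard, B, ← Nat.card_eq_fintype_card]
    _ ≤ ∑ q : B, F (φ q) := Finset.sum_le_sum fun q _ => hF' _ _ q.2.1 q.2.2.1 q.2.2.2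
    _ = ∑ e ∈ Finset.univ.map ⟨φ, hφ⟩, F e := by
        rw [Finset.sum_map, Function.Embedding.coeFn_mk]
    _ ≤ ∑ e, F e := Finset.sum_le_univ_sum_of_nonneg hF

end EdgeBoundary

section LargestComponent

variable {V : Type*} {G : SimpleGraph V}

theorem percoGraph_adj {x : G.edgeSet → Bool} {u v : V} :
    (percoGraph G x).Adj u v ↔ ∃ h : G.Adj u v, x ⟨s(u, v), h⟩ = true := by
  rw [percoGraph, SimpleGraph.fromEdgeSet_adj]
  exact ⟨fun h => h.1, fun h => ⟨h, h.1.ne⟩⟩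

theorem percoGraph_mono : Monotone (percoGraph G) := by
  intro x y hxy u v huv
  obtain ⟨hadj, hopen⟩ := percoGraph_adj.mp huv
  exact percoGraph_adj.mpr ⟨hadj, hxy _ hopen⟩

theorem percoComp_mono (v : V) : Monotone fun x => percoComp G x v :=
  fun _ _ hxy _ hu => SimpleGraph.Reachable.mono (percoGraph_mono hxy) hu

theorem mem_percoComp_of_adj {x : G.edgeSet → Bool} {u v w : V} (hu : u ∈ percoComp G x v)
    (huw : G.Adj u w) (hopen : x ⟨s(u, w), huw⟩ = true) : w ∈ percoComp G x v :=
  SimpleGraph.Reachable.trans hu (percoGraph_adj.mpr ⟨huw, hopen⟩).reachable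

variable [Finite V]

theorem compSize_le_largestComp (x : G.edgeSet → Bool) (v : V) :
    compSize G x v ≤ largestComp G x :=
  le_csSup (Set.finite_range _).bddAbove ⟨v, rfl⟩

theorem exists_compSize_eq_largestComp [Nonempty V] (x : G.edgeSet → Bool) :
    ∃ v, compSize G x v = largestComp G x :=
  Nat.sSup_mem (Set.range_nonempty _) (Set.finite_range _).bddAbove

theorem largestComp_le_card (x : G.edgeSet → Bool) : largestComp G x ≤ Nat.card V :=
  csSup_le' (Set.forall_mem_range.mpr fun _ => Set.ncard_le_card _)

theorem largestComp_mono : Monotone (largestComp G) := fun _ _ hxy =>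
  ciSup_mono (Set.finite_range _).bddAbove fun v => Set.ncard_le_ncard (percoComp_mono v hxy)

theorem compSize_lt_compSize_setEdge_of_boundary {x : G.edgeSet → Bool} {u v w : V}
    (hu : u ∈ percoComp G x v) (hw : w ∉ percoComp G x v) (huw : G.Adj u w) :
    compSize G x v < compSize G (setEdge x ⟨s(u, w), huw⟩ true) v := by
  set e : G.edgeSet := ⟨s(u, w), huw⟩
  have hopen : x ≤ setEdge x e true := by
    simpa using setEdge_mono_right x e (Bool.le_true (x e))
  refine Set.ncard_lt_ncard (Set.ssubset_iff_exists.mpr ⟨percoComp_mono v hopen, w, ?_, hw⟩)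
  exact mem_percoComp_of_adj (percoComp_mono v hopen hu) huw (setEdge_same x e true)

theorem one_le_edgeDeriv_largestComp {x : G.edgeSet → Bool} {u v w : V}
    (hv : compSize G x v = largestComp G x) (hu : u ∈ percoComp G x v)
    (hw : w ∉ percoComp G x v) (huw : G.Adj u w) :
    1 ≤ edgeDeriv (fun x => (largestComp G x : ℝ)) ⟨s(u, w), huw⟩ x := by
  set e : G.edgeSet := ⟨s(u, w), huw⟩
  have hclosed : x e = false := Bool.eq_false_iff.mpr fun h => hw (mem_percoComp_of_adj hu huw h)
  have hx : setEdge x e false = x := hclosed ▸ setEdge_self x e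
  have hlt : largestComp G x < largestComp G (setEdge x e true) :=
    hv ▸ (compSize_lt_compSize_setEdge_of_boundary hu hw huw).trans_le
      (compSize_le_largestComp _ v)
  have hsucc : (largestComp G x : ℝ) + 1 ≤ largestComp G (setEdge x e true) := by
    exact_mod_cast hlt
  rw [edgeDeriv, hx]
  linarith

theorem monotone_cast_largestComp : Monotone fun x => (largestComp G x : ℝ) :=
  Nat.mono_cast.comp largestComp_mono

theorem CheegerGT.mul_min_largestComp_le_sum_edgeDeriv [Fintype G.edgeSet] {b : ℝ}
    (hG : CheegerGT G b) (x : G.edgeSet → Bool) :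
    b * min (largestComp G x : ℝ) (Nat.card V - largestComp G x) ≤
      ∑ e, edgeDeriv (fun x => (largestComp G x : ℝ)) e x := by
  cases isEmpty_or_nonempty V
  · have hzero : largestComp G x = 0 := Nat.le_zero.mp (by simpa using largestComp_le_card x)
    simp [hzero]
  · obtain ⟨v, hv⟩ := exists_compSize_eq_largestComp x
    have hcheeger := hG.mul_min_ncard_le_edgeBoundaryCard (percoComp G x v)
    rw [show (percoComp G x v).ncard = largestComp G x from hv] at hcheeger
    have hderiv := fun e => edgeDeriv_nonneg (monotone_cast_largestComp (G := G)) e x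
    exact hcheeger.trans (edgeBoundaryCard_le_sum hderiv fun u w huw hu hw =>
      one_le_edgeDeriv_largestComp hv hu hw huw)

theorem CheegerGT.mul_expC_min_largestComp_le_deriv {b : ℝ} (hG : CheegerGT G b) {p : ℝ}
    (hp : p ∈ Set.Icc (0 : ℝ) 1) :
    b * expC p (fun x => min (largestComp G x : ℝ) (Nat.card V - largestComp G x)) ≤
      deriv (fun q => expC q fun x => (largestComp G x : ℝ)) p := by
  cases nonempty_fintype G.edgeSet
  rw [(hasDerivAt_expC _ p).deriv, ← expC_const_mul, ← expC_sum]
  exact expC_mono hp hG.mul_min_largestComp_le_sum_edgeDeriv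

theorem CheegerGT.mul_probC_mul_le_deriv_expC_largestComp {b : ℝ} (hG : CheegerGT G b)
    (hb : 0 ≤ b) (c : ℝ) {p : ℝ} (hp : p ∈ Set.Icc (0 : ℝ) 1) :
    b * (min c (1 - c) * Nat.card V *
        (probC p {x | c * (Nat.card V : ℝ) ≤ (largestComp G x : ℝ)} *
          (1 - probC p {x | c * (Nat.card V : ℝ) ≤ (largestComp G x : ℝ)}))) ≤
      (1 + b) * deriv (fun q => expC q fun x => (largestComp G x : ℝ)) p := by
  have hrange (x : G.edgeSet → Bool) :
      (largestComp G x : ℝ) ∈ Set.Icc (0 : ℝ) (Nat.card V) :=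
    ⟨Nat.cast_nonneg _, Nat.cast_le.mpr (largestComp_le_card x)⟩
  have hdispersion := mul_le_mul_of_nonneg_left (min_mul_probC_mul_le_expC_min_add hp hrange c) hb
  have hboundary := hG.mul_expC_min_largestComp_le_deriv hp
  have hpoincare := mul_le_mul_of_nonneg_left
    (expC_expC_abs_sub_le_deriv_expC hp (monotone_cast_largestComp (G := G))) hb
  linarith

end LargestComponent

theorem stmt14_general {b : ℝ} (hb : 0 < b) {α : ℝ} (hα : 0 < α) {c : ℝ}
    (hc : c ∈ Set.Ioo (0 : ℝ) 1) :
    ∃ C' > (0 : ℝ), ∀ {V : Type*} [Finite V] (G : SimpleGraph V), CheegerGT G b →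
      ∀ pa pb : ℝ, pa ∈ Set.Icc (0 : ℝ) 1 → pb ∈ Set.Icc (0 : ℝ) 1 →
        probC pa {x : G.edgeSet → Bool | c * (Nat.card V : ℝ) ≤ (largestComp G x : ℝ)} = α →
        probC pb {x : G.edgeSet → Bool | c * (Nat.card V : ℝ) ≤ (largestComp G x : ℝ)} = 1 - α →
        ∀ p ∈ Set.Icc pa pb,
          C' * (Nat.card V : ℝ) ≤ deriv (fun q => expC q fun x => (largestComp G x : ℝ)) p := by
  have hκ : 0 < min c (1 - c) := lt_min hc.1 (sub_pos.mpr hc.2)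
  refine ⟨b * min c (1 - c) * α ^ 2 / (1 + b), by positivity, ?_⟩
  intro V _ G hG pa pb hpa hpb hα_pa hα_pb p hp
  set A : Set (G.edgeSet → Bool) := {x | c * (Nat.card V : ℝ) ≤ (largestComp G x : ℝ)}
  have hA : MonotoneOn (fun p => probC p A) (Set.Icc 0 1) :=
    monotoneOn_probC_of_isUpperSet ((isUpperSet_Ici _).preimage monotone_cast_largestComp)
  have hp01 : p ∈ Set.Icc (0 : ℝ) 1 := ⟨hpa.1.trans hp.1, hp.2.trans hpb.2⟩
  have hlower : α ≤ probC p A := hα_pa ▸ hA hpa hp01 hp.1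
  have hupper : α ≤ 1 - probC p A := le_sub_comm.mp (hα_pb ▸ hA hp01 hpb hp.2)
  have hwindow : α ^ 2 ≤ probC p A * (1 - probC p A) := by
    rw [sq]
    exact mul_le_mul hlower hupper hα.le (hα.le.trans hlower)
  rw [div_mul_eq_mul_div, div_le_iff₀' (by positivity)]
  calc b * min c (1 - c) * α ^ 2 * Nat.card V
      = b * (min c (1 - c) * Nat.card V * α ^ 2) := by ring
    _ ≤ b * (min c (1 - c) * Nat.card V * (probC p A * (1 - probC p A))) := by gcongr
    _ ≤ (1 + b) * deriv (fun q => expC q fun x => (largestComp G x : ℝ)) p :=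
        hG.mul_probC_mul_le_deriv_expC_largestComp hb.le c hp01

/-- inside the critical window, the expected size of the largest component has
derivative at least `C' |V_n|`: there is `C' > 0`, depending only on `α, c, b, d`, such that
for all `n` with `|V_n|` large enough and every `p ∈ [p_{n,α}(c), p_{n,1-α}(c)]`,
`(d/dp) E_p(L_n⁽¹⁾) ≥ C' |V_n|`. Here `pa` plays the role of `p_{n,α}(c)` and `pb` of
`p_{n,1-α}(c)`. -/
theorem stmt14 (b : ℝ) (hb : 0 < b) (d : ℕ)
    (α : ℝ) (hα : α ∈ Set.Ioo (0 : ℝ) (1 / 2)) (c : ℝ) (hc : c ∈ Set.Ioo (0 : ℝ) 1) :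
    ∃ C' > (0 : ℝ), ∀ E : ExpanderSeq b d, ∃ N : ℕ, ∀ n : ℕ, N ≤ Nat.card (E.V n) →
      ∀ pa pb : ℝ, pa ∈ Set.Icc (0 : ℝ) 1 → pb ∈ Set.Icc (0 : ℝ) 1 →
        probC pa {x : (E.G n).edgeSet → Bool |
            c * (Nat.card (E.V n) : ℝ) ≤ (largestComp (E.G n) x : ℝ)} = α →
        probC pb {x : (E.G n).edgeSet → Bool |
            c * (Nat.card (E.V n) : ℝ) ≤ (largestComp (E.G n) x : ℝ)} = 1 - α →
        ∀ p ∈ Set.Icc pa pb,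
          C' * (Nat.card (E.V n) : ℝ) ≤
            deriv (fun q => expC q (fun x => (largestComp (E.G n) x : ℝ))) p := by
  obtain ⟨C', hC', hbound⟩ := stmt14_general hb hα.1 hc
  exact ⟨C', hC', fun E => ⟨0, fun n _ => have := E.finV n; hbound (E.G n) (E.cheeger_gt n)⟩⟩
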